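/- arXiv:2601.22297 — 3 statements merged into one kernel-verified Lean document; each statement's English description precedes it below -/
import Mathlib

section
/- Let (Ω, F, P) be a probability space with a filtration F_0 ⊆ F_1 ⊆ … ⊆ F_T, and let p_0, p_1, …, p_T be an adapted sequence of random variables with values in [0,1]. Let S₀ > 0, C > 0 and μ ≥ 0 be real constants, and suppose that for every t ∈ {1, …, T}, almost surely E[p_t | F_{t−1}] ≥ p_{t−1} + μ/(S₀ + t·C). Then E[p_T] ≥ E[p_0] + μ · ∑_{t=1}^{T} 1/(S₀ + t·C) ≥ E[p_0] + (μ/C) · log((S₀ + (T+1)·C)/(S₀ + C)). -/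
open MeasureTheory Finset

/-- Accumulated drift and diminishing returns: iterating the one-step conditional
drift bound yields a harmonic-sum lower bound on `E[p_T]`, which is in turn lower
bounded by a logarithmic term. -/
theorem accumulated_drift
    {Ω : Type*} {m0 : MeasurableSpace Ω}
    (P : Measure Ω) [IsProbabilityMeasure P]
    (ℱ : Filtration ℕ m0)
    (T : ℕ)
    (p : ℕ → Ω → ℝ) (hadapted : StronglyAdapted ℱ p)
    (hbdd : ∀ t, t ≤ T → ∀ ω, p t ω ∈ Set.Icc (0 : ℝ) 1)
    (S₀ C μ : ℝ) (hS₀ : 0 < S₀) (hC : 0 < C) (hμ : 0 ≤ μ)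
    (hdrift : ∀ t, 1 ≤ t → t ≤ T →
      ∀ᵐ ω ∂P, p (t - 1) ω + μ / (S₀ + (t : ℝ) * C) ≤ (P[p t | ℱ (t - 1)]) ω) :
    (∫ ω, p 0 ω ∂P) + μ * ∑ t ∈ Finset.Icc 1 T, 1 / (S₀ + (t : ℝ) * C)
        ≤ ∫ ω, p T ω ∂P
    ∧ (∫ ω, p 0 ω ∂P) + (μ / C) * Real.log ((S₀ + ((T : ℝ) + 1) * C) / (S₀ + C))
        ≤ (∫ ω, p 0 ω ∂P) + μ * ∑ t ∈ Finset.Icc 1 T, 1 / (S₀ + (t : ℝ) * C) := by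
  have hint : ∀ t, t ≤ T → Integrable (p t) P := by
    intro t ht
    refine Integrable.of_bound (C := 1)
      ((hadapted t).mono (ℱ.le t)).aestronglyMeasurable ?_
    refine Filter.Eventually.of_forall fun ω => ?_
    have h := hbdd t ht ω
    rw [Real.norm_eq_abs, abs_of_nonneg h.1]
    exact h.2
  constructor
  · have key : ∀ n, n ≤ T →
        (∫ ω, p 0 ω ∂P) + μ * ∑ t ∈ Finset.Icc 1 n, 1 / (S₀ + (t : ℝ) * C)
          ≤ ∫ ω, p n ω ∂P := by
      intro n
      induction n with
      | zero => intro _; simp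
      | succ k ih =>
        intro hk
        have h1 := ih (by omega)
        have h2 := hdrift (k + 1) (by omega) hk
        rw [Nat.add_sub_cancel] at h2
        have hi := hint k (by omega)
        have h3 := integral_mono_ae (hi.add (integrable_const _)) integrable_condExp h2
        rw [integral_condExp (ℱ.le k)] at h3
        simp only [Pi.add_apply] at h3
        rw [integral_add hi (integrable_const _)] at h3
        simp only [integral_const, probReal_univ, one_smul] at h3
        rw [Finset.sum_Icc_succ_top (by omega), mul_add, mul_one_div μ]
        linarith
    exact key T le_rfl
  · have key : ∀ n : ℕ, Real.log ((S₀ + ((n : ℝ) + 1) * C) / (S₀ + C))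
        ≤ C * ∑ t ∈ Finset.Icc 1 n, 1 / (S₀ + (t : ℝ) * C) := by
      intro n
      induction n with
      | zero => simp [div_self (by positivity : S₀ + C ≠ 0)]
      | succ k ih =>
        rw [Finset.sum_Icc_succ_top (by omega), mul_add]
        have ha : 0 < S₀ + ((k : ℝ) + 1) * C := by positivity
        have hb : 0 < S₀ + ((k : ℝ) + 1 + 1) * C := by positivity
        have hc : 0 < S₀ + C := by positivity
        have h := Real.log_le_sub_one_of_pos (div_pos hb ha)
        rw [Real.log_div hb.ne' ha.ne'] at h
        have e : (S₀ + ((k : ℝ) + 1 + 1) * C) / (S₀ + ((k : ℝ) + 1) * C) - 1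
            = C * (1 / (S₀ + ((k : ℝ) + 1) * C)) := by
          field_simp
          ring
        rw [e] at h
        rw [Real.log_div ha.ne' hc.ne'] at ih
        push_cast
        rw [Real.log_div hb.ne' hc.ne']
        linarith
    have h := mul_le_mul_of_nonneg_left (key T) (div_nonneg hμ hC.le)
    rw [← mul_assoc, div_mul_cancel₀ _ hC.ne'] at h
    linarith
end

section
/- Let K ≥ 2 and N ≥ 1 be integers, and let Y_1, …, Y_N be random variables on a probability space taking values in {1, …, K}, each with the same marginal distribution p ∈ Δ^K, where p_k ∈ (0,1) for all k and Δ := p_1 − max_{j≠1} p_j > 0. Let ρ ∈ [0,1] satisfy Cov(1{Y_a = k}, 1{Y_b = k}) ≤ ρ · p_k(1 − p_k) for all k ∈ {1, …, K} and all a ≠ b. Define the empirical distribution p̂_k = (1/N) ∑_{n=1}^N 1{Y_n = k}. Then P(∃ j ≠ 1 such that p̂_j ≥ p̂_1) ≤ K·(1 + (N−1)·ρ) / (N·Δ²). -/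
open MeasureTheory ProbabilityTheory Finset

lemma cmv_var {Ω : Type*} [MeasureSpace Ω] [IsProbabilityMeasure (ℙ : Measure Ω)]
    {N : ℕ} (hN : 1 ≤ N) (f : Fin N → Ω → ℝ) (hf : ∀ n, Measurable (f n))
    (hf01 : ∀ n ω, f n ω = 0 ∨ f n ω = 1) (q ρ : ℝ) (hρ : 0 ≤ ρ)
    (hm : ∀ n, ∫ ω, f n ω = q)
    (hc : ∀ a b, a ≠ b → (∫ ω, f a ω * f b ω) - (∫ ω, f a ω) * (∫ ω, f b ω)
      ≤ ρ * (q * (1 - q))) :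
    Integrable (fun ω => ((1 / (N : ℝ)) * ∑ n, f n ω - q) ^ 2) (ℙ : Measure Ω) ∧
    ∫ ω, ((1 / (N : ℝ)) * ∑ n, f n ω - q) ^ 2 ≤ (1 + ((N : ℝ) - 1) * ρ) / (4 * N) := by
  have hN0 : (1 : ℝ) ≤ N := by exact_mod_cast hN
  have hNpos : (0 : ℝ) < N := by linarith
  have hi : ∀ n, Integrable (f n) (ℙ : Measure Ω) := fun n =>
    Integrable.of_bound (hf n).aestronglyMeasurable 1
      (Filter.Eventually.of_forall fun ω => by rcases hf01 n ω with h | h <;> simp [h])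
  have hi2 : ∀ a b, Integrable (fun ω => f a ω * f b ω) (ℙ : Measure Ω) := fun a b =>
    Integrable.of_bound ((hf a).mul (hf b)).aestronglyMeasurable 1
      (Filter.Eventually.of_forall fun ω => by
        rcases hf01 a ω with h | h <;> rcases hf01 b ω with h' | h' <;> simp [h, h'])
  have hexp : ∀ a b, (fun ω => (f a ω - q) * (f b ω - q)) =
      fun ω => (f a ω * f b ω - q * f b ω) - (q * f a ω - q ^ 2) := by
    intro a b; funext ω; ring
  have hi3 : ∀ a b, Integrable (fun ω => (f a ω - q) * (f b ω - q)) (ℙ : Measure Ω) := by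
    intro a b
    rw [hexp]
    exact ((hi2 a b).sub ((hi b).const_mul q)).sub
      (((hi a).const_mul q).sub (integrable_const _))
  have hval : ∀ a b, ∫ ω, (f a ω - q) * (f b ω - q) = (∫ ω, f a ω * f b ω) - q ^ 2 := by
    intro a b
    have e1 : Integrable (fun ω => f a ω * f b ω - q * f b ω) (ℙ : Measure Ω) :=
      (hi2 a b).sub ((hi b).const_mul q)
    have e2 : Integrable (fun ω => q * f a ω - q ^ 2) (ℙ : Measure Ω) :=
      ((hi a).const_mul q).sub (integrable_const _)
    rw [hexp, integral_sub e1 e2,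
      integral_sub (hi2 a b) ((hi b).const_mul q),
      integral_sub ((hi a).const_mul q) (integrable_const _),
      integral_const_mul, integral_const_mul, hm, hm]
    simp
    ring
  have hq4 : q * (1 - q) ≤ 1 / 4 := by nlinarith [sq_nonneg (q - 1 / 2)]
  have hbd : ∀ a b, ∫ ω, (f a ω - q) * (f b ω - q) ≤
      ρ / 4 + (if a = b then (1 - ρ) / 4 else 0) := by
    intro a b
    rw [hval]
    split_ifs with h
    · subst h
      have : (fun ω => f a ω * f a ω) = f a := by
        funext ω; rcases hf01 a ω with h | h <;> simp [h]
      rw [this, hm]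
      nlinarith
    · have := hc a b h
      rw [hm, hm] at this
      nlinarith
  have hsq : (fun ω => ((1 / (N : ℝ)) * ∑ n, f n ω - q) ^ 2) =
      fun ω => (1 / (N : ℝ)) ^ 2 * ∑ a, ∑ b, (f a ω - q) * (f b ω - q) := by
    funext ω
    rw [← Finset.sum_mul_sum, Finset.sum_sub_distrib]
    simp
    field_simp
  have hI : Integrable (fun ω => ∑ a, ∑ b, (f a ω - q) * (f b ω - q)) (ℙ : Measure Ω) :=
    integrable_finsetSum _ fun a _ => integrable_finsetSum _ fun b _ => hi3 a b
  rw [hsq]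
  refine ⟨hI.const_mul _, ?_⟩
  rw [integral_const_mul, integral_finsetSum _ fun a _ => integrable_finsetSum _ fun b _ => hi3 a b]
  have h1 : ∑ a, ∫ ω, ∑ b, (f a ω - q) * (f b ω - q) ≤
      ∑ a : Fin N, ∑ b : Fin N, (ρ / 4 + (if a = b then (1 - ρ) / 4 else 0)) := by
    refine Finset.sum_le_sum fun a _ => ?_
    rw [integral_finsetSum _ fun b _ => hi3 a b]
    exact Finset.sum_le_sum fun b _ => hbd a b
  refine (mul_le_mul_of_nonneg_left h1 (by positivity)).trans (le_of_eq ?_)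
  simp [Finset.sum_add_distrib]
  field_simp
  ring

/-- Correlation shrinks the effective ensemble size: tail bound on the probability
that the plurality vote is not the correct answer. Answer `1` in the paper
corresponds to index `⟨0, _⟩ : Fin K` here. -/
theorem correlated_majority_vote_error_bound
    {Ω : Type*} [MeasureSpace Ω] [IsProbabilityMeasure (ℙ : Measure Ω)]
    {K N : ℕ} (hK : 2 ≤ K) (hN : 1 ≤ N)
    (Y : Fin N → Ω → Fin K) (hY : ∀ n, Measurable (Y n))
    (p : Fin K → ℝ)
    (hp0 : ∀ k, 0 < p k) (hp1 : ∀ k, p k < 1) (hpsum : ∑ k, p k = 1)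
    (hmarg : ∀ n k, (ℙ {ω | Y n ω = k}).toReal = p k)
    (Δ : ℝ)
    (hΔ : Δ = p ⟨0, by omega⟩ -
      (Finset.univ.erase (⟨0, by omega⟩ : Fin K)).sup'
        ⟨⟨1, by omega⟩, Finset.mem_erase.mpr ⟨by simp [Fin.ext_iff], Finset.mem_univ _⟩⟩ p)
    (hΔpos : 0 < Δ)
    (ρ : ℝ) (hρ : ρ ∈ Set.Icc (0 : ℝ) 1)
    (hcov : ∀ k : Fin K, ∀ a b : Fin N, a ≠ b →
      (∫ ω, (if Y a ω = k then (1 : ℝ) else 0) * (if Y b ω = k then (1 : ℝ) else 0))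
        - (∫ ω, (if Y a ω = k then (1 : ℝ) else 0)) *
          (∫ ω, (if Y b ω = k then (1 : ℝ) else 0))
      ≤ ρ * (p k * (1 - p k))) :
    (ℙ {ω | ∃ j : Fin K, j ≠ (⟨0, by omega⟩ : Fin K) ∧
        (1 / (N : ℝ)) * ∑ n, (if Y n ω = (⟨0, by omega⟩ : Fin K) then (1 : ℝ) else 0)
          ≤ (1 / (N : ℝ)) * ∑ n, (if Y n ω = j then (1 : ℝ) else 0)}).toReal
      ≤ K * (1 + ((N : ℝ) - 1) * ρ) / (N * Δ ^ 2) := by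
  classical
  have hN0 : (1 : ℝ) ≤ N := by exact_mod_cast hN
  have hNpos : (0 : ℝ) < N := by linarith
  set z : Fin K := ⟨0, by omega⟩ with hz
  have hgap : ∀ j, j ≠ z → p j + Δ ≤ p z := by
    intro j hj
    have := Finset.le_sup' p (Finset.mem_erase.mpr ⟨hj, Finset.mem_univ j⟩)
    linarith
  have hms : ∀ n k, MeasurableSet {ω | Y n ω = k} := fun n k =>
    hY n (measurableSet_singleton k)
  have hvar := fun k => cmv_var hN (fun n ω => if Y n ω = k then (1 : ℝ) else 0)
    (fun n => Measurable.ite (hms n k) measurable_const measurable_const)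
    (fun n ω => by by_cases h : Y n ω = k <;> simp [h]) (p k) ρ hρ.1
    (fun n => by
      have : (fun ω => if Y n ω = k then (1 : ℝ) else 0) =
          Set.indicator {ω | Y n ω = k} 1 := by
        funext ω; simp [Set.indicator_apply]
      rw [this, integral_indicator_one (hms n k)]
      exact hmarg n k)
    (hcov k)
  let S : Ω → ℝ := fun ω => ∑ k, ((1 / (N : ℝ)) *
    ∑ n, (if Y n ω = k then (1 : ℝ) else 0) - p k) ^ 2
  have hSi : Integrable S (ℙ : Measure Ω) := integrable_finsetSum _ fun k _ => (hvar k).1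
  have hSb : ∫ ω, S ω ≤ K * ((1 + ((N : ℝ) - 1) * ρ) / (4 * N)) := by
    rw [integral_finsetSum _ fun k _ => (hvar k).1]
    refine (Finset.sum_le_sum fun k _ => (hvar k).2).trans (le_of_eq ?_)
    simp
  have hmk := mul_meas_ge_le_integral_of_nonneg (μ := (ℙ : Measure Ω)) (f := S)
    (Filter.Eventually.of_forall fun ω => Finset.sum_nonneg fun k _ => sq_nonneg _)
    hSi (Δ ^ 2 / 4)
  have hsub : (ℙ {ω | ∃ j : Fin K, j ≠ z ∧
        (1 / (N : ℝ)) * ∑ n, (if Y n ω = z then (1 : ℝ) else 0)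
          ≤ (1 / (N : ℝ)) * ∑ n, (if Y n ω = j then (1 : ℝ) else 0)}).toReal ≤
      (ℙ : Measure Ω).real {ω | Δ ^ 2 / 4 ≤ S ω} := by
    refine measureReal_mono ?_
    rintro ω ⟨j, hj, hle⟩
    have hg := hgap j hj
    have h2 : ((1 / (N : ℝ)) * ∑ n, (if Y n ω = z then (1 : ℝ) else 0) - p z) ^ 2 +
        ((1 / (N : ℝ)) * ∑ n, (if Y n ω = j then (1 : ℝ) else 0) - p j) ^ 2 ≤ S ω := by
      rw [← Finset.sum_pair (f := fun k => ((1 / (N : ℝ)) *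
        ∑ n, (if Y n ω = k then (1 : ℝ) else 0) - p k) ^ 2) (Ne.symm hj)]
      exact Finset.sum_le_sum_of_subset_of_nonneg (Finset.subset_univ _)
        fun k _ _ => sq_nonneg _
    show Δ ^ 2 / 4 ≤ S ω
    refine le_trans ?_ h2
    generalize (1 / (N : ℝ)) * ∑ n, (if Y n ω = z then (1 : ℝ) else 0) = u at *
    generalize (1 / (N : ℝ)) * ∑ n, (if Y n ω = j then (1 : ℝ) else 0) = v at *
    have h3 : Δ ≤ (v - p j) - (u - p z) := by linarith
    have h4 : Δ ^ 2 ≤ ((v - p j) - (u - p z)) ^ 2 := pow_le_pow_left₀ hΔpos.le h3 2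
    nlinarith [sq_nonneg ((v - p j) + (u - p z)), sq_nonneg Δ]
  refine hsub.trans ?_
  rw [le_div_iff₀ (by positivity)]
  have h5 := hmk.trans hSb
  have h6 : (K : ℝ) * ((1 + ((N : ℝ) - 1) * ρ) / (4 * N)) * (4 * N) =
    K * (1 + ((N : ℝ) - 1) * ρ) := by field_simp
  have h7 := mul_le_mul_of_nonneg_right h5 (by positivity : (0 : ℝ) ≤ 4 * N)
  rw [h6] at h7
  refine le_trans (le_of_eq ?_) h7
  ring
end

section
/- Let K ≥ 1 and N ≥ 1 be integers, and let Y_1, …, Y_N be random variables on a probability space taking values in {1, …, K}, each with the same marginal distribution p ∈ Δ^K. Suppose ρ ∈ [0,1] satisfies Cov(1{Y_a = k}, 1{Y_b = k}) ≤ ρ · p_k(1 − p_k) for all k ∈ {1, …, K} and all a ≠ b. Let p̂_k = (1/N) ∑_{n=1}^N 1{Y_n = k} and let Δ > 0. Then P(∑_{k=1}^K |p̂_k − p_k| ≥ Δ) ≤ K·(1 + (N−1)·ρ)/(N·Δ²). -/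
open MeasureTheory ProbabilityTheory Finset

/-- ℓ¹-deviation tail bound for the empirical answer distribution of `N`
identically distributed but possibly correlated agents. -/
theorem empirical_distribution_l1_tail_bound
    {Ω : Type*} [MeasureSpace Ω] [IsProbabilityMeasure (ℙ : Measure Ω)]
    {K N : ℕ} (hK : 1 ≤ K) (hN : 1 ≤ N)
    (Y : Fin N → Ω → Fin K) (hY : ∀ n, Measurable (Y n))
    (p : Fin K → ℝ)
    (hpnn : ∀ k, 0 ≤ p k) (hpsum : ∑ k, p k = 1)
    (hmarg : ∀ n k, (ℙ {ω | Y n ω = k}).toReal = p k)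
    (ρ : ℝ) (hρ : ρ ∈ Set.Icc (0 : ℝ) 1)
    (hcov : ∀ k : Fin K, ∀ a b : Fin N, a ≠ b →
      (∫ ω, (if Y a ω = k then (1 : ℝ) else 0) * (if Y b ω = k then (1 : ℝ) else 0))
        - (∫ ω, (if Y a ω = k then (1 : ℝ) else 0)) *
          (∫ ω, (if Y b ω = k then (1 : ℝ) else 0))
      ≤ ρ * (p k * (1 - p k)))
    (Δ : ℝ) (hΔ : 0 < Δ) :
    (ℙ {ω | Δ ≤ ∑ k : Fin K,
        |(1 / (N : ℝ)) * ∑ n, (if Y n ω = k then (1 : ℝ) else 0) - p k|}).toReal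
      ≤ K * (1 + ((N : ℝ) - 1) * ρ) / (N * Δ ^ 2) := by
  obtain ⟨hρ0, hρ1⟩ := hρ
  have hNpos : (0 : ℝ) < N := by exact_mod_cast hN
  set X : Fin N → Fin K → Ω → ℝ := fun n k ω => if Y n ω = k then (1 : ℝ) else 0 with hX
  have hms : ∀ n k, MeasurableSet {ω | Y n ω = k} := fun n k =>
    hY n (measurableSet_singleton k)
  have hXm : ∀ n k, Measurable (X n k) := fun n k =>
    Measurable.ite (hms n k) measurable_const measurable_const
  have hX01 : ∀ n k ω, X n k ω = 0 ∨ X n k ω = 1 := by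
    intro n k ω
    simp only [hX]
    split_ifs <;> simp
  have hXi : ∀ n k, Integrable (X n k) (ℙ : Measure Ω) := by
    intro n k
    refine Integrable.of_bound (hXm n k).aestronglyMeasurable 1 (ae_of_all _ fun ω => ?_)
    rcases hX01 n k ω with h | h <;> simp [h]
  have hXXi : ∀ a b k, Integrable (fun ω => X a k ω * X b k ω) (ℙ : Measure Ω) := by
    intro a b k
    refine Integrable.of_bound ((hXm a k).mul (hXm b k)).aestronglyMeasurable 1
      (ae_of_all _ fun ω => ?_)
    rcases hX01 a k ω with h | h <;> rcases hX01 b k ω with h' | h' <;> simp [h, h']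
  have hXint : ∀ n k, ∫ ω, X n k ω = p k := by
    intro n k
    have h1 : X n k = Set.indicator {ω | Y n ω = k} (fun _ => (1 : ℝ)) := by
      funext ω
      simp [hX, Set.indicator_apply]
    rw [h1, integral_indicator_const _ (hms n k), ← hmarg n k]
    simp [Measure.real]
  have hZi : ∀ a b k, Integrable (fun ω => (X a k ω - p k) * (X b k ω - p k))
      (ℙ : Measure Ω) := by
    intro a b k
    have : (fun ω => (X a k ω - p k) * (X b k ω - p k)) =
        fun ω => X a k ω * X b k ω - p k * X a k ω - p k * X b k ω + p k * p k := by
      funext ω; ring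
    rw [this]
    exact (((hXXi a b k).sub ((hXi a k).const_mul _)).sub ((hXi b k).const_mul _)).add
      (integrable_const _)
  have hZint : ∀ a b k, ∫ ω, (X a k ω - p k) * (X b k ω - p k) =
      (∫ ω, X a k ω * X b k ω) - p k * p k := by
    intro a b k
    have : (fun ω => (X a k ω - p k) * (X b k ω - p k)) =
        fun ω => X a k ω * X b k ω - p k * X a k ω - p k * X b k ω + p k * p k := by
      funext ω; ring
    have i1 : Integrable (fun ω => X a k ω * X b k ω - p k * X a k ω) (ℙ : Measure Ω) :=
      (hXXi a b k).sub ((hXi a k).const_mul _)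
    have i2 : Integrable (fun ω => X a k ω * X b k ω - p k * X a k ω - p k * X b k ω)
        (ℙ : Measure Ω) := i1.sub ((hXi b k).const_mul _)
    rw [this, integral_add i2 (integrable_const _),
      integral_sub i1 ((hXi b k).const_mul _),
      integral_sub (hXXi a b k) ((hXi a k).const_mul _), integral_const_mul,
      integral_const_mul, hXint, hXint]
    simp
  have hZle : ∀ a b k, ∫ ω, (X a k ω - p k) * (X b k ω - p k) ≤
      (ρ + if a = b then 1 - ρ else 0) * (p k * (1 - p k)) := by
    intro a b k
    rw [hZint]
    by_cases hab : a = b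
    · subst hab
      have : (fun ω => X a k ω * X a k ω) = X a k := by
        funext ω
        rcases hX01 a k ω with h | h <;> simp [h]
      rw [this, hXint]
      simp only [if_true]
      apply le_of_eq; ring
    · have h := hcov k a b hab
      have h2 : (∫ ω, X a k ω * X b k ω) - (∫ ω, X a k ω) * (∫ ω, X b k ω)
        ≤ ρ * (p k * (1 - p k)) := h
      rw [hXint, hXint] at h2
      simpa [hab] using h2
  set D : Fin K → Ω → ℝ := fun k ω => (1 / (N : ℝ)) * ∑ n, X n k ω - p k with hD
  have hDsq : ∀ k, (fun ω => D k ω ^ 2) = fun ω =>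
      (1 / (N : ℝ) ^ 2) * ∑ a, ∑ b, (X a k ω - p k) * (X b k ω - p k) := by
    intro k
    funext ω
    rw [← Finset.sum_mul_sum, Finset.sum_sub_distrib]
    simp only [hD, Finset.sum_const, Finset.card_univ, Fintype.card_fin, nsmul_eq_mul]
    field_simp
  have hDi : ∀ k, Integrable (fun ω => D k ω ^ 2) (ℙ : Measure Ω) := by
    intro k
    rw [hDsq]
    exact (integrable_finsetSum _ fun a _ => integrable_finsetSum _ fun b _ =>
      hZi a b k).const_mul _
  set c : ℝ := (1 + ((N : ℝ) - 1) * ρ) / N with hc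
  have hc0 : 0 ≤ c := by
    have : (1 : ℝ) ≤ N := by exact_mod_cast hN
    have := mul_nonneg (sub_nonneg.2 this) hρ0
    positivity
  have hDint : ∀ k, ∫ ω, D k ω ^ 2 ≤ c * (p k * (1 - p k)) := by
    intro k
    rw [hDsq, integral_const_mul, integral_finsetSum _ fun a _ =>
      integrable_finsetSum _ fun b _ => hZi a b k]
    have h1 : ∑ a, ∫ ω, ∑ b, (X a k ω - p k) * (X b k ω - p k) ≤
        ∑ a : Fin N, ∑ b : Fin N, (ρ + if a = b then 1 - ρ else 0) * (p k * (1 - p k)) := by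
      refine Finset.sum_le_sum fun a _ => ?_
      rw [integral_finsetSum _ fun b _ => hZi a b k]
      exact Finset.sum_le_sum fun b _ => hZle a b k
    refine (mul_le_mul_of_nonneg_left h1 (by positivity)).trans (le_of_eq ?_)
    simp only [← Finset.sum_mul, Finset.sum_add_distrib, Finset.sum_ite_eq, Finset.mem_univ,
      if_true, Finset.sum_const, Finset.card_univ, Fintype.card_fin, nsmul_eq_mul, hc]
    field_simp
    ring
  have hSi : Integrable (fun ω => ∑ k, D k ω ^ 2) (ℙ : Measure Ω) :=
    integrable_finsetSum _ fun k _ => hDi k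
  have hSint : ∫ ω, ∑ k, D k ω ^ 2 ≤ c := by
    rw [integral_finsetSum _ fun k _ => hDi k]
    calc ∑ k, ∫ ω, D k ω ^ 2 ≤ ∑ k, c * p k := by
          refine Finset.sum_le_sum fun k _ => (hDint k).trans ?_
          refine mul_le_mul_of_nonneg_left ?_ hc0
          nlinarith [hpnn k]
      _ = c := by rw [← Finset.mul_sum, hpsum, mul_one]
  have hKpos : (0 : ℝ) < K := by exact_mod_cast hK
  have hsub : {ω | Δ ≤ ∑ k : Fin K, |D k ω|} ⊆ {ω | Δ ^ 2 / K ≤ ∑ k, D k ω ^ 2} := by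
    intro ω hω
    simp only [Set.mem_ofPred_eq] at hω ⊢
    have h1 := sq_sum_le_card_mul_sum_sq (s := Finset.univ) (f := fun k => |D k ω|)
    simp only [sq_abs, Finset.card_univ, Fintype.card_fin] at h1
    rw [div_le_iff₀ hKpos, mul_comm]
    exact (pow_le_pow_left₀ hΔ.le hω 2).trans h1
  have hM := mul_meas_ge_le_integral_of_nonneg (μ := (ℙ : Measure Ω))
    (ae_of_all _ fun ω => Finset.sum_nonneg fun k _ => sq_nonneg (D k ω)) hSi (Δ ^ 2 / K)
  have hmono : (ℙ {ω | Δ ≤ ∑ k : Fin K, |D k ω|}).toReal ≤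
      (ℙ : Measure Ω).real {ω | Δ ^ 2 / K ≤ ∑ k, D k ω ^ 2} := measureReal_mono hsub
  refine hmono.trans ?_
  have h3 := hM.trans hSint
  have h4 : (K : ℝ) * (1 + ((N : ℝ) - 1) * ρ) / (N * Δ ^ 2) = c / (Δ ^ 2 / K) := by
    rw [hc]; field_simp
  rw [h4, le_div_iff₀ (by positivity), mul_comm]
  exact h3
end
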